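/- arXiv:1610.03669 — 2 statements merged into one kernel-verified Lean document; each statement's English description precedes it below -/
import Mathlib

section
/- Let G be a finite group of order n > 1, let q be the smallest prime divisor of n and p the largest prime divisor of n, and suppose q·ψ(G) ≥ n·φ(n), where φ is Euler's totient function. Then either G has a normal cyclic Sylow p-subgroup, or G is solvable and has a cyclic maximal subgroup whose index in G is either p or p+1. -/
/-- `psi G` is the sum of the orders of all elements of the finite group `G`. -/
noncomputable def psi (G : Type*) [Group G] [Fintype G] : ℕ := ∑ x : G, orderOf x

/-!
An element `x` of maximal order satisfies `psi G < n * orderOf x`, so the hypothesis bounds the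
index of `⟨x⟩` by `n * minFac n / φ n`. Comparing the Euler product of `φ n` with a telescoping
product over all integers from `minFac n` to `p` turns this into an index smaller than `2 * p`.
If `p` divides that index, the index is `p`. Otherwise `⟨x⟩` contains a Sylow `p`-subgroup `P`; it
normalizes `P`, and since every subgroup containing `N(P)` has index congruent to `1` modulo `p`,
either `P` is normal or `⟨x⟩ = N(P)` is maximal of index `p + 1`.

Solvability is Herstein's theorem on abelian maximal subgroups. Modulo its normal core such a
subgroup `C` meets its other conjugates trivially, and the transfer into `C` has a kernel `K`
complementing `C`, on which the elements of `C` act without fixed points. This forces `C` to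
normalize a Sylow subgroup of `K`, which is then normal in `G` by maximality.
-/

open Subgroup MulAction

section Totient

theorem prod_Icc_one_sub_inv {a b : ℕ} (ha : 0 < a) (hab : a ≤ b) :
    ∏ k ∈ Finset.Icc a b, (1 - (k : ℚ)⁻¹) = ((a : ℚ) - 1) / b := by
  induction b, hab using Nat.le_induction with
  | base =>
    have ha' : (a : ℚ) ≠ 0 := by positivity
    rw [Finset.Icc_self, Finset.prod_singleton]
    field_simp
  | succ b hb ih =>
    have hb' : (b : ℚ) ≠ 0 := by exact_mod_cast (ha.trans_le hb).ne'
    rw [Finset.prod_Icc_succ_top (hb.trans b.le_succ), ih]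
    push_cast
    field_simp
    ring

theorem mul_sub_one_le_totient_mul {a b n : ℕ} (hab : a ≤ b)
    (hn : n.primeFactors ⊆ Finset.Icc a b) : n * (a - 1) ≤ n.totient * b := by
  rcases a.eq_zero_or_pos with rfl | ha
  · simp
  have hb : (0 : ℚ) < b := by exact_mod_cast ha.trans_le hab
  have hprod : ((a : ℚ) - 1) / b ≤ ∏ r ∈ n.primeFactors, (1 - (r : ℚ)⁻¹) := by
    rw [← prod_Icc_one_sub_inv ha hab]
    exact Finset.prod_le_prod_of_subset_of_le_one hn
      (fun r _ => sub_nonneg.mpr (Nat.cast_inv_le_one r))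
      fun r _ _ => sub_le_self _ (by positivity)
  have hcast : ((n * (a - 1) : ℕ) : ℚ) ≤ (n.totient * b : ℕ) := by
    push_cast [Nat.cast_sub ha]
    rw [Nat.totient_eq_mul_prod_factors, mul_assoc]
    exact mul_le_mul_of_nonneg_left ((div_le_iff₀ hb).mp hprod) n.cast_nonneg
  exact_mod_cast hcast

theorem minFac_mul_le_totient_mul {n p : ℕ} (hn : 1 < n)
    (hp : ∀ r : ℕ, r.Prime → r ∣ n → r ≤ p) : n.minFac * n ≤ n.totient * (2 * p) := by
  have hq : n.minFac.Prime := Nat.minFac_prime hn.ne'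
  have hsub : n.primeFactors ⊆ Finset.Icc n.minFac p := fun r hr =>
    have hr' := Nat.prime_of_mem_primeFactors hr
    have hrn := Nat.dvd_of_mem_primeFactors hr
    Finset.mem_Icc.mpr ⟨Nat.minFac_le_of_dvd hr'.two_le hrn, hp r hr' hrn⟩
  have htwo : n.minFac ≤ 2 * (n.minFac - 1) := by have := hq.two_le; omega
  calc n.minFac * n ≤ 2 * (n.minFac - 1) * n := Nat.mul_le_mul_right n htwo
    _ = 2 * (n * (n.minFac - 1)) := by ring
    _ ≤ 2 * (n.totient * p) :=
      Nat.mul_le_mul_left 2 (mul_sub_one_le_totient_mul (hp _ hq n.minFac_dvd) hsub)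
    _ = n.totient * (2 * p) := by ring

end Totient

section OrderSum

variable {G : Type*} [Group G] [Fintype G]

theorem exists_psi_lt_card_mul_orderOf [Nontrivial G] :
    ∃ x : G, psi G < Fintype.card G * orderOf x := by
  obtain ⟨x, hx⟩ := Finite.exists_max (orderOf : G → ℕ)
  obtain ⟨y, hy⟩ := exists_ne (1 : G)
  have hy' : 1 < orderOf y := lt_of_le_of_ne' (orderOf_pos y) (orderOf_eq_one_iff.not.mpr hy)
  have hone : orderOf (1 : G) < orderOf x := orderOf_one (G := G) ▸ hy'.trans_le (hx y)
  refine ⟨x, ?_⟩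
  calc psi G < ∑ _z : G, orderOf x :=
        Finset.sum_lt_sum (fun z _ => hx z) ⟨1, Finset.mem_univ 1, hone⟩
    _ = Fintype.card G * orderOf x := by simp

theorem exists_mul_index_zpowers_lt_of_le_psi [Nontrivial G] {k m : ℕ} (hm : 0 < m)
    (h : Fintype.card G * k ≤ m * psi G) :
    ∃ x : G, k * (zpowers x).index < m * Fintype.card G := by
  obtain ⟨x, hx⟩ := exists_psi_lt_card_mul_orderOf (G := G)
  have hk : k < m * orderOf x := by
    refine lt_of_mul_lt_mul_left (h.trans_lt ?_) (Fintype.card G).zero_le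
    rw [mul_left_comm]
    exact Nat.mul_lt_mul_of_pos_left hx hm
  have hindex : 0 < (zpowers x).index := Nat.pos_of_ne_zero index_ne_zero_of_finite
  refine ⟨x, (Nat.mul_lt_mul_of_pos_right hk hindex).trans_eq ?_⟩
  rw [mul_assoc, ← Nat.card_zpowers, card_mul_index, Nat.card_eq_fintype_card]

end OrderSum

section SmallIndex

variable {G : Type*} [Group G]

theorem two_mul_index_le_of_lt {H K : Subgroup G} [H.FiniteIndex] (h : H < K) :
    2 * K.index ≤ H.index := by
  have hmul := relIndex_mul_index h.le
  have hone : H.relIndex K ≠ 1 := relIndex_eq_one.not.mpr h.not_ge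
  have hzero : H.relIndex K ≠ 0 :=
    left_ne_zero_of_mul (hmul.trans_ne FiniteIndex.index_ne_zero)
  rw [← hmul]
  exact Nat.mul_le_mul_right _ (by omega)

theorem isCoatom_of_prime_index {H : Subgroup G} (hH : H.index.Prime) : IsCoatom H := by
  refine ⟨fun htop => hH.ne_one (htop ▸ index_top), fun K hK => ?_⟩
  have hmul := relIndex_mul_index hK.le
  rcases (Nat.dvd_prime hH).mp (Dvd.intro_left _ hmul) with hone | heq
  · exact index_eq_one.mp hone
  · rw [heq, Nat.mul_eq_right hH.ne_zero] at hmul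
    exact absurd (relIndex_eq_one.mp hmul) hK.not_ge

theorem le_normalizer_of_le_of_isMulCommutative {H C : Subgroup G} [IsMulCommutative C]
    (h : H ≤ C) : C ≤ normalizer (H : Set G) :=
  (le_centralizer C).trans ((centralizer_le h).trans (centralizer_le_normalizer _))

variable [Finite G] {p : ℕ} [Fact p.Prime]

theorem exists_sylow_le_of_not_dvd_index {H : Subgroup G} (h : ¬ p ∣ H.index) :
    ∃ P : Sylow p G, (P : Subgroup G) ≤ H := by
  obtain ⟨Q⟩ : Nonempty (Sylow p H) := inferInstance
  have hQ : ¬ p ∣ ((Q : Subgroup H).map H.subtype).index := by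
    rw [index_map_subtype]
    exact Nat.Prime.not_dvd_mul Fact.out Q.not_dvd_index h
  exact ⟨(Q.isPGroup'.map H.subtype).toSylow hQ, map_subtype_le _⟩

theorem index_modEq_one_of_normalizer_le {P : Sylow p G} {H : Subgroup G}
    (h : normalizer (P : Set G) ≤ H) : H.index ≡ 1 [MOD p] := by
  have hPH : (P : Subgroup G) ≤ H := le_normalizer.trans h
  have hrel : (normalizer (P : Set G)).relIndex H ≡ 1 [MOD p] := by
    have hcard := card_sylow_modEq_one p H
    rwa [(P.subtype hPH).card_eq_index_normalizer, ← Sylow.coe_coe, P.coe_subtype,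
      ← subgroupOf_normalizer_eq hPH] at hcard
  calc H.index ≡ (normalizer (P : Set G)).relIndex H * H.index [MOD p] := by
        simpa using (hrel.mul_right H.index).symm
    _ = Nat.card (Sylow p G) := by rw [relIndex_mul_index h, P.card_eq_index_normalizer]
    _ ≡ 1 [MOD p] := card_sylow_modEq_one p G

theorem lt_index_of_normalizer_le {P : Sylow p G} {H : Subgroup G}
    (h : normalizer (P : Set G) ≤ H) (hH : H ≠ ⊤) : p < H.index := by
  have := (index_modEq_one_of_normalizer_le h).symm.add_le_of_lt (one_lt_index_of_ne_top hH)
  omega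

theorem isCoatom_and_index_eq_of_normalizer_le {P : Sylow p G} {H : Subgroup G}
    (h : normalizer (P : Set G) ≤ H) (hH : H ≠ ⊤) (hlt : H.index < 2 * p) :
    IsCoatom H ∧ H.index = p + 1 := by
  refine ⟨⟨hH, fun K hK => ?_⟩, ?_⟩
  · by_contra hKtop
    have hp := lt_index_of_normalizer_le (h.trans hK.le) hKtop
    have hindex := two_mul_index_le_of_lt hK
    omega
  · have hmod : p + 1 ≡ H.index [MOD p] :=
      (Nat.add_modEq_left (n := p) (a := 1)).trans (index_modEq_one_of_normalizer_le h).symm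
    have hle := lt_index_of_normalizer_le h hH
    by_contra hne
    have := hmod.add_le_of_lt (by omega)
    omega

theorem exists_normal_isCyclic_sylow_or_isCoatom_of_index_lt {C : Subgroup G} [IsCyclic C]
    (hlt : C.index < 2 * p) :
    (∃ P : Sylow p G, (P : Subgroup G).Normal ∧ IsCyclic (P : Subgroup G)) ∨
    (IsCoatom C ∧ (C.index = p ∨ C.index = p + 1)) := by
  have hp : p.Prime := Fact.out
  by_cases hd : p ∣ C.index
  · have hindex : C.index = p :=
      Nat.eq_of_dvd_of_lt_two_mul index_ne_zero_of_finite hd hlt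
    exact Or.inr ⟨isCoatom_of_prime_index (hindex ▸ hp), Or.inl hindex⟩
  · obtain ⟨P, hPC⟩ := exists_sylow_le_of_not_dvd_index hd
    have hCN : C ≤ normalizer (P : Set G) := le_normalizer_of_le_of_isMulCommutative hPC
    by_cases htop : normalizer (P : Set G) = ⊤
    · exact Or.inl ⟨P, normalizer_eq_top_iff.mp htop, isCyclic_of_le hPC⟩
    · have hNC : C = normalizer (P : Set G) := hCN.eq_of_not_lt fun hCN' => by
        have hp := lt_index_of_normalizer_le le_rfl htop
        have hindex := two_mul_index_le_of_lt hCN'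
        omega
      have hC := isCoatom_and_index_eq_of_normalizer_le hNC.ge (hNC ▸ htop) hlt
      exact Or.inr ⟨hC.1, Or.inr hC.2⟩

end SmallIndex

section FixedPointFree

variable {G : Type*} [Group G] {c : G}

theorem exists_conj_eq_mul_of_disjoint_centralizer {L : Subgroup G} [Finite L]
    (hc : c ∈ normalizer (L : Set G)) (hL : Disjoint L (centralizer {c})) {k : G} (hk : k ∈ L) :
    ∃ x ∈ L, x * c * x⁻¹ = k * c := by
  have hfree : MonoidHom.FixedPointFree (L.normalizerMonoidHom ⟨c, hc⟩) := fun x hx => by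
    have hxc : c * x * c⁻¹ = x := congrArg Subtype.val hx
    exact Subtype.ext <| disjoint_def.mp hL x.2 <|
      mem_centralizer_singleton_iff.mpr (mul_inv_eq_iff_eq_mul.mp hxc).symm
  obtain ⟨x, hx⟩ := hfree.commutatorMap_surjective ⟨k, hk⟩
  have hxk : (x : G) / (c * x * c⁻¹) = k := congrArg Subtype.val hx
  exact ⟨x, x.2, by rw [← hxk, div_eq_mul_inv]; group⟩

variable {K : Subgroup G} [K.Normal] [Finite K]

section Action

variable {α : Type*} [MulAction G α]

theorem exists_smul_eq_self_of_disjoint_centralizer [Nonempty α]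
    (htrans : ∀ a b : α, ∃ k ∈ K, k • a = b) (hK : Disjoint K (centralizer {c})) :
    ∃ a : α, c • a = a := by
  obtain ⟨b⟩ := ‹Nonempty α›
  obtain ⟨k, hkK, hk⟩ := htrans (c • b) b
  obtain ⟨x, -, hx⟩ :=
    exists_conj_eq_mul_of_disjoint_centralizer (by simp [normalizer_eq_top]) hK hkK
  have hxb : (x * c * x⁻¹) • b = b := by rwa [hx, mul_smul]
  exact ⟨x⁻¹ • b, by rwa [eq_inv_smul_iff, smul_smul, smul_smul]⟩

theorem centralizer_le_stabilizer_of_smul_eq_self (htrans : ∀ a b : α, ∃ k ∈ K, k • a = b)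
    (hK : Disjoint K (centralizer {c})) {a : α} (ha : c • a = a) :
    centralizer {c} ≤ stabilizer G a := fun d hd => by
  obtain ⟨y, hyK, hy⟩ := htrans a (d • a)
  -- Both `c` and `y⁻¹ * c * y` fix `a`, and they agree modulo `L`, so they are conjugate under `L`.
  let L := K ⊓ stabilizer G a
  have : Finite L := Finite.of_injective _ (inclusion_injective (inf_le_left : L ≤ K))
  have hcL : c ∈ normalizer (L : Set G) :=
    normal_subgroupOf_iff_le_normalizer_inf.mp inferInstance ha
  have hyL : y⁻¹ * c * y * c⁻¹ ∈ L := by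
    refine mem_inf.mpr ⟨?_, ?_⟩
    · rw [mul_assoc, mul_assoc, ← mul_assoc c]
      exact K.mul_mem (K.inv_mem hyK) (Normal.conj_mem inferInstance _ hyK c)
    · have hdc : d * c = c * d := mem_centralizer_singleton_iff.mp hd
      rw [mem_stabilizer_iff, mul_smul, inv_smul_eq_iff.mpr ha.symm, mul_smul, mul_smul, hy,
        inv_smul_eq_iff, smul_smul, ← hdc, mul_smul, ha, hy]
  obtain ⟨x, hx, hxy⟩ := exists_conj_eq_mul_of_disjoint_centralizer hcL
    (hK.mono_left inf_le_left) hyL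
  rw [inv_mul_cancel_right] at hxy
  have hyx : y * x = 1 := by
    refine disjoint_def.mp hK (K.mul_mem hyK hx.1) (mem_centralizer_singleton_iff.mpr ?_)
    calc y * x * c = y * (x * c * x⁻¹) * x := by group
      _ = c * (y * x) := by rw [hxy]; group
  have hya : y ∈ stabilizer G a := eq_inv_of_mul_eq_one_left hyx ▸ inv_mem hx.2
  rwa [mem_stabilizer_iff, ← hy]

end Action

theorem exists_sylow_centralizer_le_normalizer (hK : Disjoint K (centralizer {c})) (p : ℕ)
    [Fact p.Prime] :
    ∃ P : Sylow p K, centralizer {c} ≤ normalizer ((P : Subgroup K).map K.subtype : Set G) := by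
  have htrans (P Q : Sylow p K) : ∃ k ∈ K, (MulAut.conjNormal k : MulAut K) • P = Q := by
    obtain ⟨k, hk⟩ := exists_smul_eq K P Q
    exact ⟨k, k.2, by rwa [MulAut.conjNormal_val, ← Sylow.smul_def]⟩
  let : MulAction G (Sylow p K) := MulAction.compHom _ (MulAut.conjNormal (H := K))
  obtain ⟨P, hP⟩ := exists_smul_eq_self_of_disjoint_centralizer htrans hK
  refine ⟨P, fun g hg => ?_⟩
  have hgP : (P : Subgroup K).map (MulAut.conjNormal g : MulAut K).toMonoidHom = P :=
    congrArg Sylow.toSubgroup (centralizer_le_stabilizer_of_smul_eq_self htrans hK hP hg)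
  have hmap : ((P : Subgroup K).map K.subtype).map (MulAut.conj g).toMonoidHom =
      (P : Subgroup K).map K.subtype := by
    nth_rw 2 [← hgP]
    rw [map_map, map_map]
    rfl
  refine mem_normalizer_iff.mpr fun x => ?_
  nth_rw 2 [← hmap]
  exact (mem_map_iff_mem (MulAut.conj g).injective).symm

end FixedPointFree

section Malnormal

variable {G : Type*} [Group G] {H : Subgroup G}

/-- A subgroup is malnormal if it meets each of its conjugates by an element outside it trivially.
For a nontrivial proper subgroup of a finite group, this says that it is a Frobenius complement. -/
def IsMalnormal (H : Subgroup G) : Prop :=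
  ∀ ⦃a g : G⦄, a ∈ H → a ≠ 1 → g * a * g⁻¹ ∈ H → g ∈ H

theorem IsMalnormal.coprime_card_index [Finite G] (hH : IsMalnormal H) :
    (Nat.card H).Coprime H.index := by
  refine Nat.coprime_of_dvd fun p hp hpH hpi => ?_
  have := Fact.mk hp
  obtain ⟨c, hc⟩ := exists_prime_orderOf_dvd_card' p hpH
  have hc1 : (c : G) ≠ 1 := fun h =>
    hp.one_lt.ne' (by rw [← hc, OneMemClass.coe_eq_one.mp h, orderOf_one])
  have hpgroup : IsPGroup p (zpowers c) := IsPGroup.of_card (n := 1) (by simpa using hc)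
  have hfixed : ((1 : G) : G ⧸ H) ∈ fixedPoints (zpowers c) (G ⧸ H) := fun k =>
    QuotientGroup.eq.mpr (by simp)
  obtain ⟨b, hb, hne⟩ := hpgroup.exists_fixed_point_of_prime_dvd_card_of_fixed_point
    (α := G ⧸ H) (by rwa [← index_eq_card]) hfixed
  induction b using QuotientGroup.induction_on with | H g => ?_
  refine hne (QuotientGroup.eq.mpr ?_)
  have hg : (((c : G) * g : G) : G ⧸ H) = g := hb ⟨c, mem_zpowers c⟩
  have hconj := inv_mem (QuotientGroup.eq.mp hg)
  simpa using hH (g := g⁻¹) c.2 hc1 (by simpa [mul_assoc] using hconj)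

theorem isComplement'_ker_of_bijective {f : G →* H}
    (hf : Function.Bijective fun h : H => f h) : f.ker.IsComplement' H := by
  refine isComplement'_of_disjoint_and_mul_eq_univ (disjoint_def.mpr fun hker hH => ?_) ?_
  · exact congrArg Subtype.val (hf.1 (a₁ := ⟨_, hH⟩) (a₂ := 1) (hker.trans f.map_one.symm))
  · refine Set.eq_univ_of_forall fun g => ?_
    obtain ⟨h, hh⟩ := hf.2 (f g)
    exact ⟨g * (h : G)⁻¹, by simp [f.mem_ker, ← hh], h, h.2, inv_mul_cancel_right g (h : G)⟩

theorem IsMalnormal.exists_normal_isComplement' [Finite G] [IsMulCommutative H]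
    (hH : IsMalnormal H) : ∃ K : Subgroup G, K.Normal ∧ K.IsComplement' H := by
  open scoped IsMulCommutative in
  let f : G →* H := MonoidHom.transfer (MonoidHom.id H)
  have hf : (fun h : H => f h) = powCoprime hH.coprime_card_index := funext fun h =>
    MonoidHom.transfer_eq_pow _ _ fun k g hg => by
      have hk : (h : G) ^ k ∈ H := H.pow_mem h.2 k
      by_cases hone : (h : G) ^ k = 1
      · simp [hone]
      · have hgH : g⁻¹ ∈ H := hH hk hone (by simpa using hg)
        rw [setLike_mul_comm hgH hk, inv_mul_cancel_right]
  refine ⟨f.ker, inferInstance, isComplement'_ker_of_bijective ?_⟩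
  rw [hf]
  exact (powCoprime _).bijective

theorem centralizer_singleton_eq_of_isCoatom [IsMulCommutative H] (hH : IsCoatom H)
    (hcore : H.normalCore = ⊥) {a : G} (ha : a ∈ H) (ha1 : a ≠ 1) : centralizer {a} = H := by
  have hle : H ≤ centralizer {a} := fun b hb =>
    mem_centralizer_singleton_iff.mpr (setLike_mul_comm hb ha)
  refine (hH.le_iff.mp hle).resolve_left fun htop => ha1 ?_
  have hmem : a ∈ H.normalCore := fun b => by
    have hb : b ∈ centralizer {a} := htop ▸ mem_top b
    rwa [mem_centralizer_singleton_iff.mp hb, mul_inv_cancel_right]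
  rwa [hcore, mem_bot] at hmem

theorem isMalnormal_of_isCoatom_of_normalCore_eq_bot [IsMulCommutative H] (hH : IsCoatom H)
    (hcore : H.normalCore = ⊥) : IsMalnormal H := fun a g ha ha1 hga => by
  have hg : g ∈ normalizer (H : Set G) := by
    have hga1 : g * a * g⁻¹ ≠ 1 := by simpa using ha1
    refine mem_normalizer_iff.mpr fun b => ?_
    nth_rw 1 [← centralizer_singleton_eq_of_isCoatom hH hcore ha ha1]
    rw [← centralizer_singleton_eq_of_isCoatom hH hcore hga hga1, mem_centralizer_singleton_iff,
      mem_centralizer_singleton_iff]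
    exact (Commute.conj_iff g).symm
  rcases hH.le_iff.mp (le_normalizer (H := H)) with htop | heq
  · have : H.Normal := normalizer_eq_top_iff.mp htop
    rw [normalCore_eq_self] at hcore
    exact absurd (by simpa [hcore] using ha) ha1
  · rwa [heq] at hg

end Malnormal

section Herstein

variable {G : Type*} [Group G]

theorem isCoatom_map_of_ker_le {G' : Type*} [Group G'] {f : G →* G'}
    (hf : Function.Surjective f) {H : Subgroup G} (hH : IsCoatom H) (hker : f.ker ≤ H) :
    IsCoatom (H.map f) := by
  have hcomap : (H.map f).comap f = H := by rw [comap_map_eq, sup_eq_left.mpr hker]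
  refine ⟨fun h => hH.1 (by rw [← hcomap, h, comap_top]), fun K hK => comap_injective hf ?_⟩
  rw [comap_top]
  exact hH.2 _ (hcomap.symm.trans_lt ((comap_lt_comap_of_surjective hf).mpr hK))

theorem normalCore_map_mk'_normalCore (H : Subgroup G) :
    (H.map (QuotientGroup.mk' H.normalCore)).normalCore = ⊥ := by
  have hπ := QuotientGroup.mk'_surjective H.normalCore
  have hcomap : (H.map (QuotientGroup.mk' H.normalCore)).normalCore.comap
      (QuotientGroup.mk' H.normalCore) ≤ H.normalCore := by
    refine normal_le_normalCore.mpr ((comap_mono (normalCore_le _)).trans ?_)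
    simp [comap_map_eq, normalCore_le]
  rw [eq_bot_iff, ← map_comap_eq_self_of_surjective hπ (normalCore _)]
  exact (map_mono hcomap).trans_eq (QuotientGroup.map_mk'_self _)

theorem isSolvable_of_sup_eq_top {H N : Subgroup G} [N.Normal] [Group.IsSolvable H]
    [Group.IsSolvable N] (h : H ⊔ N = ⊤) : Group.IsSolvable G := by
  have hrange : ((QuotientGroup.mk' N).comp H.subtype).range = ⊤ := by
    rw [MonoidHom.range_comp, H.range_subtype, ← map_top_of_surjective _
      (QuotientGroup.mk'_surjective N), ← h, Subgroup.map_sup, QuotientGroup.map_mk'_self,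
      sup_bot_eq]
  have := Group.isSolvable_of_surjective (MonoidHom.range_eq_top.mp hrange)
  exact (Group.isSolvable_iff_subgroup_quotient N).mpr ⟨inferInstance, this⟩

theorem isSolvable_of_isMulCommutative [IsMulCommutative G] : Group.IsSolvable G :=
  Group.isSolvable_of_comm mul_comm'

theorem isSolvable_of_isCoatom_bot (h : IsCoatom (⊥ : Subgroup G)) : Group.IsSolvable G := by
  obtain ⟨g, -, hg⟩ := SetLike.exists_of_lt h.lt_top
  have htop : zpowers g = ⊤ := h.2 _ (bot_lt_iff_ne_bot.mpr (by simpa using hg))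
  have : IsCyclic G := ⟨g, (eq_top_iff' _).mp htop⟩
  exact isSolvable_of_isMulCommutative

variable [Finite G] {C : Subgroup G} [IsMulCommutative C]

theorem isSolvable_of_isCoatom_of_normalCore_eq_bot (hC : IsCoatom C)
    (hcore : C.normalCore = ⊥) : Group.IsSolvable G := by
  rcases eq_or_ne C ⊥ with rfl | hbot
  · exact isSolvable_of_isCoatom_bot hC
  obtain ⟨⟨c, hc⟩, hc1⟩ := C.ne_bot_iff_exists_ne_one.mp hbot
  obtain ⟨K, hKnormal, hK⟩ :=
    (isMalnormal_of_isCoatom_of_normalCore_eq_bot hC hcore).exists_normal_isComplement'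
  have hcentralizer : centralizer {c} = C :=
    centralizer_singleton_eq_of_isCoatom hC hcore hc fun h => hc1 (Subtype.ext h)
  have hKbot : Nat.card K ≠ 1 := fun h =>
    hC.1 (isComplement'_bot_left.mp (card_eq_one.mp h ▸ hK))
  obtain ⟨r, hr, hrK⟩ := Nat.exists_prime_and_dvd hKbot
  have := Fact.mk hr
  obtain ⟨P, hP⟩ := exists_sylow_centralizer_le_normalizer (hcentralizer ▸ hK.disjoint) r
  rw [hcentralizer] at hP
  let R := (P : Subgroup K).map K.subtype
  have hRC : ¬ R ≤ C := fun h => P.ne_bot_of_dvd_card hrK <|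
    (map_eq_bot_iff_of_injective _ K.subtype_injective).mp <|
      (hK.disjoint.mono_left (map_subtype_le _)).eq_bot_of_le h
  have hnormalizer : normalizer (R : Set G) = ⊤ :=
    hC.2 _ (hP.lt_of_not_ge fun h => hRC (le_normalizer.trans h))
  have : R.Normal := normalizer_eq_top_iff.mp hnormalizer
  have : Group.IsNilpotent R := (P.isPGroup'.map K.subtype).isNilpotent
  have := isSolvable_of_isMulCommutative (G := C)
  exact isSolvable_of_sup_eq_top (hC.2 _ (left_lt_sup.mpr hRC))

theorem isSolvable_of_isCoatom_of_isMulCommutative (hC : IsCoatom C) : Group.IsSolvable G := by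
  have hcoatom : IsCoatom (C.map (QuotientGroup.mk' C.normalCore)) :=
    isCoatom_map_of_ker_le (QuotientGroup.mk'_surjective _) hC
      ((QuotientGroup.ker_mk' _).trans_le C.normalCore_le)
  have hquot : Group.IsSolvable (G ⧸ C.normalCore) :=
    isSolvable_of_isCoatom_of_normalCore_eq_bot hcoatom (normalCore_map_mk'_normalCore C)
  have hcore : Group.IsSolvable C.normalCore :=
    have := isSolvable_of_isMulCommutative (G := C)
    Group.isSolvable_of_isSolvable_injective (inclusion_injective C.normalCore_le)
  exact (Group.isSolvable_iff_subgroup_quotient C.normalCore).mpr ⟨hcore, hquot⟩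

end Herstein

theorem normal_sylow_or_cyclic_maximal_of_psi_ge {G : Type*} [Group G] [Fintype G] (n p : ℕ)
    (hn : Fintype.card G = n) (h1 : 1 < n)
    (hp : p.Prime) (hpd : p ∣ n) (hpmax : ∀ r : ℕ, r.Prime → r ∣ n → r ≤ p)
    (hpsi : n * n.totient ≤ n.minFac * psi G) :
    (∃ P : Sylow p G, (P : Subgroup G).Normal ∧ IsCyclic (P : Subgroup G)) ∨
    (IsSolvable G ∧ ∃ M : Subgroup G, IsCyclic M ∧ IsCoatom M ∧
      (M.index = p ∨ M.index = p + 1)) := by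
  have := Fact.mk hp
  have : Nontrivial G := Fintype.one_lt_card_iff_nontrivial.mp (hn ▸ h1)
  obtain ⟨x, hx⟩ : ∃ x : G, n.totient * (zpowers x).index < n.minFac * n := by
    subst hn
    exact exists_mul_index_zpowers_lt_of_le_psi (Nat.minFac_pos _) hpsi
  have hlt : (zpowers x).index < 2 * p :=
    lt_of_mul_lt_mul_left (hx.trans_le (minFac_mul_le_totient_mul h1 hpmax)) n.totient.zero_le
  rcases exists_normal_isCyclic_sylow_or_isCoatom_of_index_lt hlt with hP | ⟨hC, hindex⟩
  · exact Or.inl hP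
  · exact Or.inr ⟨isSolvable_of_isCoatom_of_isMulCommutative hC, _, inferInstance, hC, hindex⟩
end

section
/- Let G be a finite group of order 2^α·3^β (α, β ≥ 0) containing a cyclic subgroup of index less than 6. Then the second derived subgroup G'' is contained in the center Z(G). -/
/-!
Let `K` be the kernel of the action of `G` on the cosets of a cyclic subgroup `C`. As `K` is cyclic
and normal, its automorphism group is abelian, so `K ⊓ G'` is central in `G'` and `G'` is a central
extension of the derived subgroup of the transitive permutation group `G ⧸ K`, whose point
stabilizers are cyclic.

If the index of `C` is a prime `p`, a Sylow subgroup of `G ⧸ K` either has order dividing `p` or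
fixes a point, so all Sylow subgroups are cyclic, `(G ⧸ K)'` is cyclic and `G'` is abelian. If the
index is 4, then `G ⧸ K` is not all of `S₄`, whose point stabilizers are not abelian, so it has
order 4, 8 or 12 and its derived subgroup has order at most 4. Hence either `G'` is abelian, or `G'`
is a Klein four group modulo its center. In the second case `G''` is generated by the commutator of
any two elements of `G'` that do not commute; it is a normal subgroup of order 2, hence central.
-/

open Subgroup MulAction
open scoped commutatorElement

section Centralizers

variable {G : Type*} [Group G] (N : Subgroup G) [N.Normal]

theorem ker_conjNormal_eq_centralizer :
    (MulAut.conjNormal (H := N)).ker = centralizer (N : Set G) := by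
  ext g
  simp only [MonoidHom.mem_ker, MulEquiv.ext_iff, Subtype.ext_iff, MulAut.conjNormal_apply,
    MulAut.one_apply, Subtype.forall, mem_centralizer_iff, SetLike.mem_coe, mul_inv_eq_iff_eq_mul]
  simp only [eq_comm]

theorem commutator_le_centralizer_of_isCyclic [IsCyclic N] :
    commutator G ≤ centralizer (N : Set G) := by
  let _ := (IsCyclic.mulAutMulEquiv N).toMonoidHom.commGroupOfInjective
    (IsCyclic.mulAutMulEquiv N).injective
  rw [← ker_conjNormal_eq_centralizer]
  exact Abelianization.commutator_subset_ker _

theorem le_center_of_card_eq_two (hN : Nat.card N = 2) : N ≤ center G := by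
  have := Nat.finite_of_card_ne_zero (hN.trans_ne two_ne_zero)
  have := isCyclic_of_prime_card (p := 2) hN
  have : Subsingleton (MulAut N) :=
    (Nat.card_eq_one_iff_unique.1 (by rw [IsCyclic.card_mulAut, hN, Nat.totient_two])).1
  rw [← centralizer_univ, ← coe_top, le_centralizer_iff, ← ker_conjNormal_eq_centralizer]
  exact fun g _ => Subsingleton.elim _ _

end Centralizers

section CenterQuotient

variable {G : Type*} [Group G]

theorem normal_of_le_center {N : Subgroup G} (hN : N ≤ center G) : N.Normal where
  conj_mem n hn g := by rwa [mem_center_iff.1 (hN hn) g, mul_inv_cancel_right]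

theorem commutator_le_of_closure_eq_top {S : Set G} (hS : closure S = ⊤) (N : Subgroup G)
    [N.Normal] (hN : ∀ x ∈ S, ∀ y ∈ S, ⁅x, y⁆ ∈ N) : commutator G ≤ N := by
  let π := QuotientGroup.mk' N
  have hcomm : ∀ x ∈ π '' S, ∀ y ∈ π '' S, x * y = y * x := by
    rintro _ ⟨x, hx, rfl⟩ _ ⟨y, hy, rfl⟩
    rw [← commutatorElement_eq_one_iff_mul_comm, ← map_commutatorElement]
    exact (QuotientGroup.eq_one_iff _).2 (hN x hx y hy)
  have hclosure : closure (π '' S) = ⊤ := by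
    rw [← MonoidHom.map_closure, hS, map_top_of_surjective _ (QuotientGroup.mk'_surjective N)]
  have := isMulCommutative_closure hcomm
  rw [← le_centralizer_iff_isMulCommutative, hclosure, ← commutator_eq_bot_iff_le_centralizer,
    ← map_top_of_surjective π (QuotientGroup.mk'_surjective N), ← map_commutator,
    Subgroup.map_eq_bot_iff, QuotientGroup.ker_mk'] at this
  exact this

theorem closure_union_pair_eq_top_of_isKleinFour (N : Subgroup G) [N.Normal]
    [IsKleinFour (G ⧸ N)] {a b : G} (ha : a ∉ N) (hb : b ∉ N) (hab : a⁻¹ * b ∉ N) :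
    closure (N ∪ {a, b} : Set G) = ⊤ := by
  set L := closure (N ∪ {a, b} : Set G)
  have haL : a ∈ L := subset_closure (by simp)
  have hbL : b ∈ L := subset_closure (by simp)
  have mem_of_mk_eq {x y : G} (hy : y ∈ L) (hxy : (x : G ⧸ N) = y) : x ∈ L := by
    have : y⁻¹ * x ∈ L := subset_closure (.inl (QuotientGroup.eq.1 hxy.symm))
    simpa using L.mul_mem hy this
  refine eq_top_iff.2 fun x _ => ?_
  by_cases hx1 : (x : G ⧸ N) = 1
  · exact mem_of_mk_eq L.one_mem hx1
  by_cases hxa : (x : G ⧸ N) = a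
  · exact mem_of_mk_eq haL hxa
  by_cases hxb : (x : G ⧸ N) = b
  · exact mem_of_mk_eq hbL hxb
  exact mem_of_mk_eq (L.mul_mem haL hbL) <|
    IsKleinFour.eq_mul_of_ne_all (mt (QuotientGroup.eq_one_iff a).1 ha)
      (mt (QuotientGroup.eq_one_iff b).1 hb) (mt QuotientGroup.eq.1 hab) hx1 hxa hxb

theorem commutatorElement_mem_of_isMulCommutative_quotient (N : Subgroup G) [N.Normal]
    [IsMulCommutative (G ⧸ N)] (a b : G) : ⁅a, b⁆ ∈ N := by
  rw [← QuotientGroup.eq_one_iff, ← QuotientGroup.mk'_apply, map_commutatorElement,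
    commutatorElement_eq_one_iff_mul_comm, mul_comm']

theorem commutatorElement_sq_eq_one {a b : G} (hab : ⁅a, b⁆ ∈ center G) (ha : a * a ∈ center G) :
    ⁅a, b⁆ ^ 2 = 1 :=
  calc ⁅a, b⁆ ^ 2 = a * ⁅a, b⁆ * a⁻¹ * ⁅a, b⁆ := by
        rw [mem_center_iff.1 hab a, mul_inv_cancel_right, sq]
    _ = ⁅a * a, b⁆ := (commutatorElement_mul_left_eq_conj_mul a a b).symm
    _ = 1 := commutatorElement_eq_one_iff_mul_comm.2 (mem_center_iff.1 ha b).symm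

theorem commutator_eq_zpowers_of_isKleinFour [IsKleinFour (G ⧸ center G)] {a b : G}
    (hab : a * b ≠ b * a) : commutator G = zpowers ⁅a, b⁆ := by
  have := IsKleinFour.isMulCommutative (G := G ⧸ center G)
  have hc : ⁅a, b⁆ ∈ center G := commutatorElement_mem_of_isMulCommutative_quotient _ a b
  have : (zpowers ⁅a, b⁆).Normal := normal_of_le_center (zpowers_le.2 hc)
  have ha : a ∉ center G := fun ha => hab (mem_center_iff.1 ha b).symm
  have hb : b ∉ center G := fun hb => hab (mem_center_iff.1 hb a)
  have ha_inv_b : a⁻¹ * b ∉ center G := fun h => hab <| by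
    simpa [mul_assoc] using congrArg (a * ·) (mem_center_iff.1 h a)
  refine le_antisymm (commutator_le_of_closure_eq_top
    (closure_union_pair_eq_top_of_isKleinFour (center G) ha hb ha_inv_b) _ ?_)
    (zpowers_le.2 (commutator_mem_commutator (mem_top a) (mem_top b)))
  rintro x (hx | hx) y hy
  · rw [commutatorElement_eq_one_iff_mul_comm.2 (mem_center_iff.1 hx y).symm]
    exact one_mem _
  obtain hy | hy := hy
  · rw [commutatorElement_eq_one_iff_mul_comm.2 (mem_center_iff.1 hy x)]
    exact one_mem _
  obtain hx | hx := hx <;> obtain hy | hy := hy <;> rw [hx, hy]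
  · rw [commutatorElement_self]
    exact one_mem _
  · exact mem_zpowers _
  · rw [← commutatorElement_inv a b]
    exact (zpowers ⁅a, b⁆).inv_mem (mem_zpowers _)
  · rw [commutatorElement_self]
    exact one_mem _

theorem card_commutator_eq_two_of_isKleinFour [IsKleinFour (G ⧸ center G)] :
    Nat.card (commutator G) = 2 := by
  obtain ⟨a, b, hab⟩ : ∃ a b : G, a * b ≠ b * a := by
    by_contra! hcomm
    have : center G = ⊤ := eq_top_iff.2 fun x _ => mem_center_iff.2 fun y => hcomm y x
    have : Subsingleton (G ⧸ center G) := QuotientGroup.subsingleton_iff.2 this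
    exact IsKleinFour.not_isCyclic (G := G ⧸ center G) inferInstance
  have := IsKleinFour.isMulCommutative (G := G ⧸ center G)
  rw [commutator_eq_zpowers_of_isKleinFour hab, Nat.card_zpowers]
  refine orderOf_eq_prime (commutatorElement_sq_eq_one
    (commutatorElement_mem_of_isMulCommutative_quotient _ a b) ?_)
    (mt commutatorElement_eq_one_iff_mul_comm.1 hab)
  rw [← QuotientGroup.eq_one_iff, QuotientGroup.mk_mul, IsKleinFour.mul_self]

theorem isCyclic_or_isKleinFour_of_card_le_four [Finite G] (hG : Nat.card G ≤ 4) :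
    IsCyclic G ∨ IsKleinFour G := by
  have hpos : 0 < Nat.card G := Nat.card_pos
  obtain h | h | h : Nat.card G ∣ 2 ∨ Nat.card G = 3 ∨ Nat.card G = 4 := by
    interval_cases Nat.card G <;> simp
  · exact .inl (isCyclic_of_card_dvd_prime h)
  · exact .inl (isCyclic_of_prime_card (p := 3) h)
  · exact or_iff_not_imp_left.2 fun hcyc =>
      ⟨h, (not_isCyclic_iff_exponent_eq_prime Nat.prime_two (h.trans (by norm_num))).1 hcyc⟩

end CenterQuotient

section SecondDerived

variable {G : Type*} [Group G]

theorem derivedSeries_two_eq_bot_iff : derivedSeries G 2 = ⊥ ↔ IsMulCommutative (commutator G) := by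
  rw [derivedSeries_succ, derivedSeries_one, commutator_eq_bot_iff_le_centralizer,
    le_centralizer_iff_isMulCommutative]

theorem card_derivedSeries_two :
    Nat.card (derivedSeries G 2) = Nat.card (commutator (commutator G)) := by
  rw [derivedSeries_succ, derivedSeries_one, ← map_subtype_commutator,
    card_map_of_injective (subtype_injective _)]

theorem derivedSeries_two_le_center_of_index_center_le_four [(center (commutator G)).FiniteIndex]
    (h : (center (commutator G)).index ≤ 4) : derivedSeries G 2 ≤ center G := by
  obtain hcyc | hklein := isCyclic_or_isKleinFour_of_card_le_four h
  · let π := QuotientGroup.mk' (center (commutator G))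
    have := π.isMulCommutative_of_isCyclic_of_ker_le_center (QuotientGroup.ker_mk' _).le
    exact (derivedSeries_two_eq_bot_iff.2 this).trans_le bot_le
  · exact le_center_of_card_eq_two _
      (card_derivedSeries_two.trans card_commutator_eq_two_of_isKleinFour)

variable {P : Type*} [Group P]

theorem map_commutator_of_surjective {f : G →* P} (hf : Function.Surjective f) :
    (commutator G).map f = commutator P := by
  simpa only [derivedSeries_one] using map_derivedSeries_eq hf 1

variable (f : G →* P) [IsCyclic f.ker]

theorem ker_subgroupMap_commutator_le_center :
    (f.subgroupMap (commutator G)).ker ≤ center (commutator G) := by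
  rw [ker_subgroupMap]
  exact fun x hx => mem_center_iff.2 fun y => Subtype.ext
    (mem_centralizer_iff.1 (commutator_le_centralizer_of_isCyclic f.ker y.2) x hx).symm

variable {f}

theorem derivedSeries_two_eq_bot_of_isCyclic_commutator (hf : Function.Surjective f)
    [IsCyclic (commutator P)] : derivedSeries G 2 = ⊥ := by
  have : IsCyclic ((commutator G).map f) := by rwa [map_commutator_of_surjective hf]
  exact derivedSeries_two_eq_bot_iff.2 <|
    (f.subgroupMap (commutator G)).isMulCommutative_of_isCyclic_of_ker_le_center
      (ker_subgroupMap_commutator_le_center f)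

theorem derivedSeries_two_le_center_of_card_commutator_le_four (hf : Function.Surjective f)
    [Finite (commutator P)] (h : Nat.card (commutator P) ≤ 4) : derivedSeries G 2 ≤ center G := by
  have hker := ker_subgroupMap_commutator_le_center f
  have hindex : (f.subgroupMap (commutator G)).ker.index = Nat.card (commutator P) := by
    rw [index_ker, MonoidHom.range_eq_top.2 (f.subgroupMap_surjective _), card_top,
      map_commutator_of_surjective hf]
  have : (f.subgroupMap (commutator G)).ker.FiniteIndex := ⟨hindex.trans_ne Nat.card_pos.ne'⟩
  have : (center (commutator G)).FiniteIndex := finiteIndex_of_le hker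
  exact derivedSeries_two_le_center_of_index_center_le_four
    ((index_antitone hker).trans (hindex.trans_le h))

end SecondDerived

section PermutationGroups

variable {X : Type*}

theorem card_dvd_prime_of_isPGroup_of_faithfulSMul {p : ℕ} [Fact p.Prime] (hX : Nat.card X = p)
    {P : Type*} [Group P] [MulAction P X] [FaithfulSMul P X] (hP : IsPGroup p P) :
    Nat.card P ∣ p := by
  have hp : p.Prime := Fact.out
  have := Nat.finite_of_card_ne_zero (hX.trans_ne hp.ne_zero)
  have : Finite P := .of_injective _ (toPerm_injective (α := P) (β := X))
  have hdvd : Nat.card P ∣ p.factorial := by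
    rw [← hX, ← Nat.card_perm]
    exact card_dvd_of_injective (toPermHom P X) toPerm_injective
  obtain ⟨n, hn⟩ := IsPGroup.iff_card.1 hP
  suffices n ≤ 1 by simpa [hn] using pow_dvd_pow p this
  by_contra! hn2
  have : p * p ∣ p * (p - 1).factorial := by
    rw [Nat.mul_factorial_pred hp.ne_zero, ← sq]
    exact (pow_dvd_pow p hn2).trans (hn ▸ hdvd)
  have : p ≤ p - 1 := hp.dvd_factorial.1 (Nat.dvd_of_mul_dvd_mul_left hp.pos this)
  have := hp.pos
  lia

theorem isZGroup_of_isCyclic_stabilizer (hX : (Nat.card X).Prime) {P : Type*} [Group P]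
    [MulAction P X] [FaithfulSMul P X] [∀ x : X, IsCyclic (stabilizer P x)] : IsZGroup P := by
  have := Nat.finite_of_card_ne_zero hX.ne_zero
  have : Finite P := .of_injective _ (toPerm_injective (α := P) (β := X))
  refine ⟨fun q hq Q => ?_⟩
  have := Fact.mk hq
  obtain rfl | hne := eq_or_ne q (Nat.card X)
  · exact isCyclic_of_card_dvd_prime
      (card_dvd_prime_of_isPGroup_of_faithfulSMul rfl Q.isPGroup')
  · have hqX : ¬ q ∣ Nat.card X := mt (Nat.prime_dvd_prime_iff_eq hq hX).1 hne
    obtain ⟨x, hx⟩ := Q.isPGroup'.nonempty_fixed_point_of_prime_not_dvd_card X hqX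
    exact isCyclic_of_le (show (Q : Subgroup P) ≤ stabilizer P x from fun g hg => hx ⟨g, hg⟩)

theorem exists_mul_ne_mul_of_mem_stabilizer_perm (hX : 4 ≤ Nat.card X) (x : X) :
    ∃ σ ∈ stabilizer (Equiv.Perm X) x, ∃ τ ∈ stabilizer (Equiv.Perm X) x, σ * τ ≠ τ * σ := by
  classical
  have : Finite X := Nat.finite_of_card_ne_zero (by lia)
  let e₀ : Fin 4 ↪ X := (Fin.castLEEmb hX).trans (Finite.equivFin X).symm.toEmbedding
  let e : Fin 4 ↪ X := e₀.trans (Equiv.swap (e₀ 0) x).toEmbedding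
  have hx : e 0 = x := Equiv.swap_apply_left _ _
  have swap_mem {i j : Fin 4} (hi : 0 ≠ i) (hj : 0 ≠ j) :
      Equiv.swap (e i) (e j) ∈ stabilizer (Equiv.Perm X) x := by
    rw [mem_stabilizer_iff, ← hx]
    exact Equiv.swap_apply_of_ne_of_ne (e.injective.ne hi) (e.injective.ne hj)
  refine ⟨_, swap_mem (i := 1) (j := 2) (by decide) (by decide),
    _, swap_mem (i := 2) (j := 3) (by decide) (by decide), fun h => ?_⟩
  simpa [Equiv.swap_apply_def] using Equiv.congr_fun h (e 1)

theorem two_mul_card_commutator_le {P : Type*} [Group P] [Finite P] [Nontrivial P]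
    [Group.IsSolvable P] : 2 * Nat.card (commutator P) ≤ Nat.card P := by
  rw [← (commutator P).card_mul_index, mul_comm]
  gcongr
  exact one_lt_index_of_ne_top (Group.IsSolvable.commutator_lt_top_of_nontrivial P).ne

theorem card_commutator_le_four_of_card_eq_twelve (hX : Nat.card X = 4)
    {P : Subgroup (Equiv.Perm X)} (hP : Nat.card P = 12) : Nat.card (commutator P) ≤ 4 := by
  classical
  have : Finite X := Nat.finite_of_card_ne_zero (by lia)
  have := Fintype.ofFinite X
  have hindex : P.index = 2 := by
    have hmul := P.card_mul_index
    rw [hP, Nat.card_perm, hX, show Nat.factorial 4 = 24 from rfl] at hmul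
    lia
  rw [Equiv.Perm.eq_alternatingGroup_of_index_eq_two hindex,
    ← alternatingGroup.kleinFour_eq_commutator hX,
    alternatingGroup.kleinFour_card_of_card_eq_four hX]

theorem card_commutator_le_four_of_isPretransitive (hX : Nat.card X = 4)
    (P : Subgroup (Equiv.Perm X)) [IsPretransitive P X]
    [∀ x : X, IsMulCommutative (stabilizer P x)] : Nat.card (commutator P) ≤ 4 := by
  have : Finite X := Nat.finite_of_card_ne_zero (by lia)
  obtain ⟨x⟩ : Nonempty X := (Nat.card_pos_iff.1 (by lia)).1
  have hperm : Nat.card (Equiv.Perm X) = 24 := by rw [Nat.card_perm, hX]; rfl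
  have hdvd : Nat.card P ∣ 24 := hperm ▸ card_subgroup_dvd_card P
  have hfour : 4 ∣ Nat.card P := by
    rw [← hX, ← index_stabilizer_of_transitive P x]
    exact index_dvd_card _
  have hne : Nat.card P ≠ 24 := fun h => by
    obtain rfl : P = ⊤ := eq_top_of_card_eq P (h.trans hperm.symm)
    obtain ⟨σ, hσ, τ, hτ, hne⟩ := exists_mul_ne_mul_of_mem_stabilizer_perm hX.ge x
    have hcomm := setLike_mul_comm
      (show ⟨σ, mem_top σ⟩ ∈ stabilizer (⊤ : Subgroup (Equiv.Perm X)) x from hσ)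
      (show ⟨τ, mem_top τ⟩ ∈ stabilizer (⊤ : Subgroup (Equiv.Perm X)) x from hτ)
    exact hne (congrArg Subtype.val hcomm)
  have hcard : Nat.card P = 4 ∨ Nat.card P = 8 ∨ Nat.card P = 12 := by
    have := Nat.le_of_dvd (by norm_num) hdvd
    interval_cases Nat.card P <;> lia
  obtain h | h | h := hcard
  · exact (card_le_card_group _).trans h.le
  · have := (IsPGroup.of_card (p := 2) (n := 3) h).isNilpotent
    have : Nontrivial P := Finite.one_lt_card_iff_nontrivial.1 (by lia)
    have := two_mul_card_commutator_le (P := P)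
    lia
  · exact card_commutator_le_four_of_card_eq_twelve hX h

end PermutationGroups

section CosetAction

variable {G : Type*} [Group G]

theorem stabilizer_range_toPermHom {X : Type*} [MulAction G X] (x : X) :
    stabilizer (toPermHom G X).range x =
      (stabilizer G x).map (toPermHom G X).rangeRestrict := by
  ext ⟨_, g, rfl⟩
  refine ⟨fun hg => ⟨g, hg, rfl⟩, ?_⟩
  rintro ⟨h, hh, hhg⟩
  rw [← hhg]
  exact hh

instance isPretransitive_range_toPermHom {X : Type*} [MulAction G X] [IsPretransitive G X] :
    IsPretransitive (toPermHom G X).range X :=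
  ⟨fun x y => (exists_smul_eq G x y).imp' (toPermHom G X).rangeRestrict fun _ => id⟩

variable (H : Subgroup G) [IsCyclic H]

theorem isCyclic_stabilizer_quotient (x : G ⧸ H) : IsCyclic (stabilizer G x) := by
  obtain ⟨g, hg⟩ := exists_smul_eq G ((1 : G) : G ⧸ H) x
  have : IsCyclic (stabilizer G ((1 : G) : G ⧸ H)) := by rwa [stabilizer_quotient]
  exact isCyclic_of_surjective (stabilizerEquivStabilizer hg.symm) (MulEquiv.surjective _)

instance isCyclic_stabilizer_range_toPermHom (x : G ⧸ H) :
    IsCyclic (stabilizer (toPermHom G (G ⧸ H)).range x) := by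
  have := isCyclic_stabilizer_quotient H x
  rw [stabilizer_range_toPermHom]
  exact isCyclic_of_surjective _ ((toPermHom G (G ⧸ H)).rangeRestrict.subgroupMap_surjective _)

instance isCyclic_ker_rangeRestrict_toPermHom :
    IsCyclic (toPermHom G (G ⧸ H)).rangeRestrict.ker := by
  rw [MonoidHom.ker_rangeRestrict, ← normalCore_eq_ker]
  exact isCyclic_of_le (normalCore_le H)

theorem derivedSeries_two_eq_bot_of_prime_index (hH : H.index.Prime) : derivedSeries G 2 = ⊥ := by
  have : H.FiniteIndex := ⟨hH.ne_zero⟩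
  have : IsZGroup (toPermHom G (G ⧸ H)).range := isZGroup_of_isCyclic_stabilizer hH
  have := IsZGroup.isCyclic_commutator (toPermHom G (G ⧸ H)).range
  exact derivedSeries_two_eq_bot_of_isCyclic_commutator
    (toPermHom G (G ⧸ H)).rangeRestrict_surjective

theorem derivedSeries_two_le_center_of_index_eq_four (hH : H.index = 4) :
    derivedSeries G 2 ≤ center G := by
  have : H.FiniteIndex := ⟨by lia⟩
  exact derivedSeries_two_le_center_of_card_commutator_le_four
    (toPermHom G (G ⧸ H)).rangeRestrict_surjective
    (card_commutator_le_four_of_isPretransitive hH _)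

end CosetAction

theorem two_three_group_cyclic_small_index_general {G : Type*} [Group G] (H : Subgroup G)
    [IsCyclic H] [H.FiniteIndex] (hidx : H.index < 6) : derivedSeries G 2 ≤ center G := by
  have hpos : 0 < H.index := Nat.pos_of_ne_zero FiniteIndex.index_ne_zero
  obtain h | h | h : H.index = 1 ∨ H.index = 4 ∨ H.index.Prime := by
    interval_cases H.index <;> norm_num
  · obtain rfl := index_eq_one.1 h
    rw [← centralizer_univ, ← coe_top]
    exact le_top.trans (le_centralizer ⊤)
  · exact derivedSeries_two_le_center_of_index_eq_four H h
  · exact (derivedSeries_two_eq_bot_of_prime_index H h).trans_le bot_le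

theorem two_three_group_cyclic_small_index {G : Type*} [Group G] [Fintype G]
    (α β : ℕ) (hcard : Fintype.card G = 2 ^ α * 3 ^ β)
    (H : Subgroup G) (hHcyc : IsCyclic H) (hidx : H.index < 6) :
    derivedSeries G 2 ≤ Subgroup.center G :=
  two_three_group_cyclic_small_index_general H hidx
end
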